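/- KKT solution of the linear C-Learner (constrained least squares with a single first-order-error constraint): Let X be an n × d real matrix with G := XᵀX invertible, and let y, h ∈ ℝⁿ with δ := hᵀ X G^{−1} Xᵀ h ≠ 0. Define ŷ := X G^{−1} Xᵀ y (the OLS fitted values), λ̂ := hᵀ(y − ŷ)/δ, and θ̂ := G^{−1} Xᵀ (y + λ̂·h). Then (i) θ̂ is feasible: hᵀ(y − X θ̂) = 0; and (ii) θ̂ is optimal: for every θ ∈ ℝᵈ with hᵀ(y − X θ) = 0, one has ‖y − X θ̂‖² ≤ ‖y − X θ‖². Hence θ̂ solves min_θ {½‖y − Xθ‖² : hᵀ(y − Xθ) = 0}, and equals the OLS coefficient with respect to the pseudo-label y + λ̂·h. -/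

import Mathlib

open Matrix Finset

/-- The Gram matrix `G = XᵀX`. -/
noncomputable def gramCL {n d : ℕ} (X : Matrix (Fin n) (Fin d) ℝ) :
    Matrix (Fin d) (Fin d) ℝ := Xᵀ * X

/-- The OLS fitted values `ŷ = X G⁻¹ Xᵀ y`. -/
noncomputable def olsFitCL {n d : ℕ} (X : Matrix (Fin n) (Fin d) ℝ) (y : Fin n → ℝ) :
    Fin n → ℝ := X *ᵥ ((gramCL X)⁻¹ *ᵥ (Xᵀ *ᵥ y))

/-- The dual variable `λ̂ = hᵀ(y − ŷ)/δ` where `δ = hᵀ X G⁻¹ Xᵀ h`. -/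
noncomputable def lamCL {n d : ℕ} (X : Matrix (Fin n) (Fin d) ℝ) (y h : Fin n → ℝ) : ℝ :=
  (h ⬝ᵥ (y - olsFitCL X y)) / (h ⬝ᵥ (X *ᵥ ((gramCL X)⁻¹ *ᵥ (Xᵀ *ᵥ h))))

/-- The constrained least squares solution `θ̂ = G⁻¹ Xᵀ (y + λ̂·h)`,
the OLS coefficient with respect to the pseudo-label `y + λ̂·h`. -/
noncomputable def thetaCL {n d : ℕ} (X : Matrix (Fin n) (Fin d) ℝ) (y h : Fin n → ℝ) :
    Fin d → ℝ := (gramCL X)⁻¹ *ᵥ (Xᵀ *ᵥ (y + lamCL X y h • h))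

/-- KKT solution of the linear C-Learner (constrained least squares with a single
first-order-error constraint): with `G = XᵀX` invertible and
`δ = hᵀ X G⁻¹ Xᵀ h ≠ 0`, the vector `θ̂ = G⁻¹ Xᵀ (y + λ̂ h)` is feasible
for the constraint `hᵀ(y − Xθ) = 0` and minimizes `‖y − Xθ‖²` among feasible `θ`. -/
theorem linear_clearner_kkt (n d : ℕ)
    (X : Matrix (Fin n) (Fin d) ℝ) (y h : Fin n → ℝ)
    (hG : IsUnit (gramCL X).det)
    (hδ : h ⬝ᵥ (X *ᵥ ((gramCL X)⁻¹ *ᵥ (Xᵀ *ᵥ h))) ≠ 0) :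
    h ⬝ᵥ (y - X *ᵥ thetaCL X y h) = 0 ∧
    ∀ θ : Fin d → ℝ, h ⬝ᵥ (y - X *ᵥ θ) = 0 →
      ∑ i, (y i - (X *ᵥ thetaCL X y h) i) ^ 2 ≤ ∑ i, (y i - (X *ᵥ θ) i) ^ 2 := by
  have hfeas : h ⬝ᵥ (y - X *ᵥ thetaCL X y h) = 0 := by
    have hl : lamCL X y h * (h ⬝ᵥ (X *ᵥ ((gramCL X)⁻¹ *ᵥ (Xᵀ *ᵥ h))))
        = h ⬝ᵥ (y - olsFitCL X y) := by
      unfold lamCL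
      exact div_mul_cancel₀ _ hδ
    have he : X *ᵥ thetaCL X y h = olsFitCL X y
        + lamCL X y h • (X *ᵥ ((gramCL X)⁻¹ *ᵥ (Xᵀ *ᵥ h))) := by
      unfold thetaCL olsFitCL
      simp only [mulVec_add, mulVec_smul]
    rw [he, ← sub_sub, dotProduct_sub, dotProduct_smul, smul_eq_mul, hl, sub_self]
  refine ⟨hfeas, fun θ hθ => ?_⟩
  have hnormal : Xᵀ *ᵥ (X *ᵥ thetaCL X y h) = Xᵀ *ᵥ (y + lamCL X y h • h) := by
    have h1 : gramCL X *ᵥ thetaCL X y h = Xᵀ *ᵥ (y + lamCL X y h • h) := by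
      unfold thetaCL
      rw [mulVec_mulVec, mul_nonsing_inv _ hG, one_mulVec]
    rw [← h1, mulVec_mulVec]
    rfl
  have hr : Xᵀ *ᵥ (y - X *ᵥ thetaCL X y h) = -(lamCL X y h • (Xᵀ *ᵥ h)) := by
    rw [mulVec_sub, hnormal, mulVec_add, mulVec_smul]
    abel
  have hmove : ∀ (u : Fin n → ℝ) (v : Fin d → ℝ), u ⬝ᵥ (X *ᵥ v) = (Xᵀ *ᵥ u) ⬝ᵥ v := by
    intro u v
    rw [dotProduct_mulVec, mulVec_transpose]
  have hz : h ⬝ᵥ (X *ᵥ (thetaCL X y h - θ)) = 0 := by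
    rw [dotProduct_sub] at hfeas hθ
    rw [mulVec_sub, dotProduct_sub]
    linarith
  have hcross : (y - X *ᵥ thetaCL X y h) ⬝ᵥ (X *ᵥ (thetaCL X y h - θ)) = 0 := by
    rw [hmove, hr, neg_dotProduct, smul_dotProduct, ← hmove, hz, smul_zero, neg_zero]
  have hexp : ∑ i, (y i - (X *ᵥ θ) i) ^ 2 = ∑ i, (y i - (X *ᵥ thetaCL X y h) i) ^ 2
      + 2 * ((y - X *ᵥ thetaCL X y h) ⬝ᵥ (X *ᵥ (thetaCL X y h - θ)))
      + ∑ i, ((X *ᵥ (thetaCL X y h - θ)) i) ^ 2 := by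
    rw [dotProduct, Finset.mul_sum, ← Finset.sum_add_distrib, ← Finset.sum_add_distrib]
    refine Finset.sum_congr rfl fun i _ => ?_
    rw [mulVec_sub]
    simp only [Pi.sub_apply]
    ring
  have hnn : 0 ≤ ∑ i, ((X *ᵥ (thetaCL X y h - θ)) i) ^ 2 :=
    Finset.sum_nonneg fun i _ => sq_nonneg _
  rw [hexp, hcross]
  linarith
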